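/- The map ρ is a well-defined retraction onto H: for every (d,e) ∈ H₀M X, ρ(d,e) lies in H X, and ρ restricted to H X is the identity, i.e. ρ(d,e) = (d,e) for every (d,e) ∈ H X. -/

import Mathlib

open scoped ENNReal NNReal
open Classical

universe u v w

/-- Raw trajectories: a duration in `ℝ≥0∞` and a partial evolution `ℝ≥0 → Option X`. -/
abbrev Traj (X : Type u) := ℝ≥0∞ × (ℝ≥0 → Option X)

/-- The flattening condition: if the duration is finite, the evolution is constant
from the duration onwards.  Membership in `H₀M X` means exactly `Flat`. -/
def Flat {X : Type u} (p : Traj X) : Prop :=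
  ∀ t : ℝ≥0, p.1 ≤ (t : ℝ≥0∞) → p.2 t = p.2 p.1.toNNReal

/-- The unit of `H₀M`. -/
def eta {X : Type u} (x : X) : Traj X := (0, fun _ => some x)

/-- The Kleisli lifting `f^†` of the monad `H₀M`. -/
noncomputable def kl {X : Type u} {Y : Type v} (f : X → Traj Y) (p : Traj X) : Traj Y :=
  if p.1 = ⊤ then (p.1, fun t => (p.2 t).bind fun x' => (f x').2 0)
  else
    match p.2 p.1.toNNReal with
    | none => (p.1, fun t => (p.2 t).bind fun x' => (f x').2 0)
    | some x =>
        (p.1 + (f x).1,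
          fun t =>
            if (t : ℝ≥0∞) < p.1 then (p.2 t).bind fun x' => (f x').2 0
            else (f x).2 (t - p.1.toNNReal))

/-- Membership in `H₊ X ⊆ H₀M X`: the evolution is not everywhere `none`, and it is
defined at every time instant strictly below the duration. -/
def memHp {X : Type u} (p : Traj X) : Prop :=
  p.2 ≠ (fun _ => none) ∧ ∀ t : ℝ≥0, (t : ℝ≥0∞) < p.1 → p.2 t ≠ none

/-- Membership in `H X ⊆ H₀M X`: either the evolution is total, or the duration is `∞`
and the domain of the evolution is downward closed. -/
def memH {X : Type u} (p : Traj X) : Prop :=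
  (∀ t, p.2 t ≠ none) ∨
    (p.1 = ⊤ ∧ ∀ s t : ℝ≥0, s ≤ t → p.2 t ≠ none → p.2 s ≠ none)

/-- The approximation order `⊑` on `H₀M X`. -/
def TrajLE {X : Type u} (p q : Traj X) : Prop :=
  p.1 ≤ q.1 ∧ (∀ t, p.2 t ≠ none → q.2 t = p.2 t) ∧
    (p.1 ≠ ⊤ → p.2 p.1.toNNReal ≠ none → p.1 = q.1)

/-- Join of an ω-chain in `H₀M X`: the duration is the supremum of the durations, and
the evolution at `t` is the common value `(c i).2 t` whenever it is `≠ none` for some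
`i`, and `none` otherwise. -/
noncomputable def chainJoin {X : Type u} (c : ℕ → Traj X) : Traj X :=
  (⨆ i, (c i).1,
    fun t => if h : ∃ i, (c i).2 t ≠ none then (c h.choose).2 t else none)

/-- `d⋆ = sup { s < d ∣ e is defined on [0, s) }`. -/
noncomputable def dstar {X : Type u} (p : Traj X) : ℝ≥0∞ :=
  sSup {s : ℝ≥0∞ | s < p.1 ∧ ∀ t : ℝ≥0, (t : ℝ≥0∞) < s → p.2 t ≠ none}

/-- The retraction `ρ : H₀M X → H₀M X` onto `H X`. -/
noncomputable def rho {X : Type u} (p : Traj X) : Traj X :=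
  ((if ∀ t, p.2 t ≠ none then p.1 else ⊤),
    fun t =>
      if (t : ℝ≥0∞) ≤ dstar p then p.2 t
      else if ∀ t', p.2 t' ≠ none then p.2 (dstar p).toNNReal else none)

/-- The iterates `f⁽ⁿ⁾` of `f : X → H₀M (Y ⊕ X)`. -/
noncomputable def iter {X Y : Type u} (f : X → Traj (Y ⊕ X)) : ℕ → X → Traj Y
  | 0, _ => (0, fun _ => none)
  | n + 1, x => kl (Sum.elim eta (iter f n)) (f x)

/-- The least-fixpoint iteration `f^‡ x = ⊔ₙ f⁽ⁿ⁾ x`. -/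
noncomputable def iterStar {X Y : Type u} (f : X → Traj (Y ⊕ X)) (x : X) : Traj Y :=
  chainJoin fun n => iter f n x

/-- `f : X → H₊ (A ⊕ B)` is progressive in `B` (guarded in the second summand). -/
def Prog {X : Type u} {A B : Type v} (f : X → Traj (A ⊕ B)) : Prop :=
  ∀ x, ∃ a : A, (f x).2 0 = some (Sum.inl a)

/-!
For a total evolution `d⋆ = d`, so `ρ` freezes `e` from time `d` on, which makes it flat and
changes nothing if it already was. Otherwise `ρ` sets the duration to `∞` and cuts `e` off after
`d⋆`; since `e` is defined on `[0, d⋆)`, what remains has a downward closed domain. If `d = ∞` and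
the domain of `e` is already downward closed, every `t` in it satisfies `t ≤ d⋆`, so nothing is
cut off.
-/

section

variable {X : Type u} {p : Traj X}

theorem ne_none_of_lt_dstar {t : ℝ≥0} (ht : (t : ℝ≥0∞) < dstar p) : p.2 t ≠ none := by
  obtain ⟨s, ⟨-, hs⟩, hts⟩ := lt_sSup_iff.mp ht
  exact hs t hts

theorem le_dstar {s : ℝ≥0∞} (hs : s < p.1) (h : ∀ t : ℝ≥0, (t : ℝ≥0∞) < s → p.2 t ≠ none) :
    s ≤ dstar p :=
  le_sSup ⟨hs, h⟩

theorem dstar_le_fst (p : Traj X) : dstar p ≤ p.1 :=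
  sSup_le fun _ hs => hs.1.le

theorem dstar_eq_fst_of_total (h : ∀ t, p.2 t ≠ none) : dstar p = p.1 :=
  (dstar_le_fst p).antisymm <|
    le_of_forall_lt_imp_le_of_dense fun _ hs => le_dstar hs fun t _ => h t

theorem rho_of_total (h : ∀ t, p.2 t ≠ none) :
    rho p = (p.1, fun t : ℝ≥0 => if (t : ℝ≥0∞) ≤ p.1 then p.2 t else p.2 p.1.toNNReal) := by
  simp only [rho, dstar_eq_fst_of_total h, if_pos h]

theorem rho_of_not_total (h : ¬ ∀ t, p.2 t ≠ none) :
    rho p = (⊤, fun t : ℝ≥0 => if (t : ℝ≥0∞) ≤ dstar p then p.2 t else none) := by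
  simp only [rho, if_neg h]

theorem flat_of_fst_eq_top (h : p.1 = ⊤) : Flat p := fun _ ht =>
  absurd (h ▸ ht) ENNReal.coe_lt_top.not_ge

theorem flat_rho (p : Traj X) : Flat (rho p) := by
  by_cases h : ∀ t, p.2 t ≠ none
  · rw [rho_of_total h]
    intro t (ht : p.1 ≤ t)
    rcases ht.eq_or_lt with hd | hlt
    · simp only [hd, ENNReal.toNNReal_coe]
    · simp only [hlt.not_ge, if_false, ite_self]
  · exact flat_of_fst_eq_top (by rw [rho_of_not_total h])

theorem rho_snd_ne_none_of_total (h : ∀ t, p.2 t ≠ none) (t : ℝ≥0) : (rho p).2 t ≠ none := by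
  rw [rho_of_total h]
  dsimp only
  split_ifs
  exacts [h t, h p.1.toNNReal]

theorem rho_snd_ne_none_iff_of_not_total (h : ¬ ∀ t, p.2 t ≠ none) {t : ℝ≥0} :
    (rho p).2 t ≠ none ↔ (t : ℝ≥0∞) ≤ dstar p ∧ p.2 t ≠ none := by
  rw [rho_of_not_total h]
  exact ite_ne_right_iff

theorem memH_rho (p : Traj X) : memH (rho p) := by
  by_cases h : ∀ t, p.2 t ≠ none
  · exact Or.inl (rho_snd_ne_none_of_total h)
  · refine Or.inr ⟨by rw [rho_of_not_total h], fun s t hst ht => ?_⟩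
    rw [rho_snd_ne_none_iff_of_not_total h] at ht ⊢
    obtain ⟨htd, ht⟩ := ht
    refine ⟨(ENNReal.coe_le_coe.mpr hst).trans htd, ?_⟩
    rcases hst.eq_or_lt with rfl | hlt
    · exact ht
    · exact ne_none_of_lt_dstar ((ENNReal.coe_lt_coe.mpr hlt).trans_le htd)

theorem rho_eq_self_of_total (hp : Flat p) (h : ∀ t, p.2 t ≠ none) : rho p = p := by
  rw [rho_of_total h]
  refine Prod.ext rfl (funext fun t => ?_)
  exact ite_eq_left_iff.mpr fun ht => (hp t (not_le.mp ht).le).symm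

theorem rho_eq_self_of_fst_eq_top (hd : p.1 = ⊤)
    (hdom : ∀ s t : ℝ≥0, s ≤ t → p.2 t ≠ none → p.2 s ≠ none) : rho p = p := by
  have le_dstar_of_ne_none (t : ℝ≥0) (ht : p.2 t ≠ none) : (t : ℝ≥0∞) ≤ dstar p :=
    le_dstar (hd ▸ ENNReal.coe_lt_top) fun s hs => hdom s t (ENNReal.coe_lt_coe.mp hs).le ht
  by_cases h : ∀ t, p.2 t ≠ none
  · exact rho_eq_self_of_total (flat_of_fst_eq_top hd) h
  · rw [rho_of_not_total h]
    refine Prod.ext hd.symm (funext fun t => ?_)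
    exact ite_eq_left_iff.mpr fun ht => (not_ne_iff.mp (mt (le_dstar_of_ne_none t) ht)).symm

theorem rho_eq_self (hp : Flat p) (hH : memH p) : rho p = p := by
  rcases hH with htotal | ⟨hd, hdom⟩
  · exact rho_eq_self_of_total hp htotal
  · exact rho_eq_self_of_fst_eq_top hd hdom

end

theorem rho_retraction_general (X : Type u) :
    (∀ p : Traj X, Flat (rho p) ∧ memH (rho p)) ∧
    (∀ p : Traj X, Flat p → memH p → rho p = p) :=
  ⟨fun p => ⟨flat_rho p, memH_rho p⟩, fun _ => rho_eq_self⟩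

/-- `ρ` is a well-defined retraction onto `H`: it maps `H₀M X` into `H X`, and is the
identity on `H X`. -/
theorem rho_retraction (X : Type u) :
    (∀ p : Traj X, Flat p → Flat (rho p) ∧ memH (rho p)) ∧
    (∀ p : Traj X, Flat p → memH p → rho p = p) :=
  ⟨fun p _ => (rho_retraction_general X).1 p, (rho_retraction_general X).2⟩
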